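/- Let k ≥ 1, r ≥ 2k+1 and n ≥ 2r−1 be integers, and let A be an r×n sign matrix. Then the number of k-neighborly plain travels of A is at most ∑_{i=0}^{r−1} C(n−1, i) − ∑_{i=1}^{k} ( C(n−3i+1, r−2i+1) + C(n−3i−1, r−2i) ), where C denotes the binomial coefficient. -/

import Mathlib

/-- An `r × n` sign matrix: entries in `{+1, -1}` (1-indexed: `1 ≤ i ≤ r`, `1 ≤ j ≤ n`). -/
def IsSignMatrix (r n : ℕ) (A : ℕ → ℕ → ℤ) : Prop :=
  ∀ i j, 1 ≤ i → i ≤ r → 1 ≤ j → j ≤ n → A i j = 1 ∨ A i j = -1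

/-- `A_S`: the matrix obtained from `A` by negating every entry of each column in `S`. -/
def reorient (A : ℕ → ℕ → ℤ) (S : Finset ℕ) : ℕ → ℕ → ℤ :=
  fun i j => if j ∈ S then -A i j else A i j

/-- The first column `c'` with `c < c' ≤ n` where row `i` changes sign relative to
entry `a_{i,c}`, if such a column exists. -/
def rowChange (A : ℕ → ℕ → ℤ) (n i c : ℕ) : Option ℕ :=
  (List.range (n + 1)).find? fun c' => decide (c < c' ∧ A i c' ≠ A i c)

/-- `ttEntry A n i` is the column at which the top travel of `A` enters row `i`
(rows and columns 1-indexed): the travel enters row 1 at column 1, and, having entered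
row `i` at column `c`, it enters row `i+1` at the first sign change of row `i` after
column `c` (if any).  The value `some` at the "virtual" row `r+1` means the top travel
had a sign change in the bottom row `r`, i.e. the top travel is positive. -/
def ttEntry (A : ℕ → ℕ → ℤ) (n : ℕ) : ℕ → Option ℕ
  | 0 => none
  | 1 => some 1
  | i + 2 => (ttEntry A n (i + 1)).bind (rowChange A n (i + 1))

/-- The top travel of the `r × n` sign matrix `A` is positive: it contains two
horizontally consecutive entries of row `r` with opposite signs. -/
def ttPositive (A : ℕ → ℕ → ℤ) (r n : ℕ) : Prop :=
  (ttEntry A n (r + 1)).isSome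

/-- `A` is `k`-neighborly: for every set `S` of at most `k` columns, the top travel
of `A_S` is not positive. -/
def IsNeighborly (A : ℕ → ℕ → ℤ) (r n k : ℕ) : Prop :=
  ∀ S : Finset ℕ, S ⊆ Finset.Icc 1 n → S.card ≤ k → ¬ ttPositive (reorient A S) r n

/-- A plain travel of an `r × n` sign matrix, identified with the set `D` of columns of
its downward (vertical) moves: the columns `2 ≤ j₁ < ⋯ < j_{s-1} ≤ n` with `s ≤ r`. -/
def IsPlainTravel (r n : ℕ) (D : Finset ℕ) : Prop :=
  D ⊆ Finset.Icc 2 n ∧ D.card ≤ r - 1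

/-- The top travel of `A` follows exactly the plain travel with downward-move columns `D`:
it makes its downward moves precisely at the columns of `D` (entering rows `2, …, |D|+1`
there) and then ends at column `n` in row `|D|+1` without a further sign change. -/
def ttFollows (A : ℕ → ℕ → ℤ) (n : ℕ) (D : Finset ℕ) : Prop :=
  ttEntry A n (D.card + 2) = none ∧
  ∀ c, c ∈ D ↔ ∃ i, 2 ≤ i ∧ i ≤ D.card + 1 ∧ ttEntry A n i = some c

/-- The plain travel `D` of `A` is `k`-neighborly: there is a set `R` of columns such that
the top travel of `A_R` follows exactly the path `D` and `A_R` is a `k`-neighborly matrix. -/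
def IsNeighborlyTravel (A : ℕ → ℕ → ℤ) (r n k : ℕ) (D : Finset ℕ) : Prop :=
  ∃ R : Finset ℕ, R ⊆ Finset.Icc 1 n ∧ ttFollows (reorient A R) n D ∧
    IsNeighborly (reorient A R) r n k

/-!
Reversing at most one column among the next three makes the top travel descend two rows,
and reversing at most one column makes it descend one row in the very next column. Hence a travel
with `r - 2i` vertical moves in columns at most `n - 3i`, or with `r - 2i + 1` of them in columns at
most `n - 3i + 2`, becomes positive after at most `i ≤ k` reversals and is not
`k`-neighborly. Discarding these travels from all plain travels gives the bound.
-/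

open Finset

variable {A B : ℕ → ℕ → ℤ} {k r n i c d t : ℕ} {D S T : Finset ℕ}

theorem IsSignMatrix.ne_zero (hA : IsSignMatrix r n A) :
    ∀ i ∈ Icc 1 r, ∀ j ∈ Icc 1 n, A i j ≠ 0 := by
  intro i hi j hj
  rw [mem_Icc] at hi hj
  rcases hA i j hi.1 hi.2 hj.1 hj.2 with h | h <;> simp [h]

theorem reorient_of_mem {j : ℕ} (hj : j ∈ S) : reorient A S i j = -A i j :=
  if_pos hj

theorem reorient_of_notMem {j : ℕ} (hj : j ∉ S) : reorient A S i j = A i j :=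
  if_neg hj

theorem reorient_ne_zero {j : ℕ} (h : A i j ≠ 0) : reorient A S i j ≠ 0 := by
  unfold reorient
  split_ifs
  exacts [neg_ne_zero.mpr h, h]

theorem reorient_reorient (h : Disjoint S T) :
    reorient (reorient A S) T = reorient A (S ∪ T) := by
  funext i j
  have hj : j ∈ S → j ∉ T := fun hS => disjoint_left.mp h hS
  by_cases hS : j ∈ S <;> by_cases hT : j ∈ T <;> simp_all [reorient]

theorem reorient_singleton_ne_left {u v : ℕ} (huv : u ≠ v) (h : A i u = A i v)
    (hu : A i u ≠ 0) : reorient A {u} i u ≠ reorient A {u} i v := by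
  rw [reorient_of_mem (mem_singleton_self u), reorient_of_notMem (by simpa using huv.symm), ← h]
  exact neg_ne_self.mpr hu

theorem reorient_singleton_ne_right {u v : ℕ} (huv : u ≠ v) (h : A i u = A i v)
    (hv : A i v ≠ 0) : reorient A {v} i u ≠ reorient A {v} i v :=
  (reorient_singleton_ne_left huv.symm h.symm hv).symm

theorem rowChange_eq_some_iff :
    rowChange A n i c = some d ↔
      c < d ∧ d ≤ n ∧ A i d ≠ A i c ∧ ∀ x, c < x → x < d → A i x = A i c := by
  simp only [rowChange, List.find?_range_eq_some, decide_eq_true_eq, List.mem_range,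
    Bool.not_eq_true', decide_eq_false_iff_not]
  grind

theorem exists_rowChange_le {u v : ℕ} (hcu : c ≤ u) (huv : u < v) (hv : v ≤ n)
    (hne : A i u ≠ A i v) : ∃ d ≤ v, rowChange A n i c = some d := by
  obtain ⟨x, hcx, hxv, hx⟩ : ∃ x, c < x ∧ x ≤ v ∧ A i x ≠ A i c := by
    by_cases hvc : A i v = A i c
    · have huc : A i u ≠ A i c := hvc ▸ hne
      exact ⟨u, hcu.lt_of_ne fun h => huc (h ▸ rfl), huv.le, huc⟩
    · exact ⟨v, hcu.trans_lt huv, le_rfl, hvc⟩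
  have hsome : (rowChange A n i c).isSome :=
    List.find?_isSome.mpr ⟨x, by simp; omega, by simp [hcx, hx]⟩
  obtain ⟨d, hd⟩ := Option.isSome_iff_exists.mp hsome
  refine ⟨d, ?_, hd⟩
  by_contra! hvd
  exact hx ((rowChange_eq_some_iff.mp hd).2.2.2 x hcx (hxv.trans_lt hvd))

theorem ttEntry_succ_of_eq_some (h : ttEntry A n i = some c) :
    ttEntry A n (i + 1) = rowChange A n i c := by
  cases i <;> simp_all [ttEntry]

theorem ttEntry_congr (hAB : ∀ i, ∀ j ≤ c, A i j = B i j) (hd : d ≤ c)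
    (h : ttEntry A n i = some d) : ttEntry B n i = some d := by
  induction i generalizing d with
  | zero => simp [ttEntry] at h
  | succ i ih =>
    cases i with
    | zero => exact h
    | succ i =>
      obtain ⟨e, he, hed⟩ := Option.bind_eq_some_iff.mp h
      have hed' := rowChange_eq_some_iff.mp hed
      have hec : e ≤ c := hed'.1.le.trans hd
      rw [ttEntry_succ_of_eq_some (ih hec he), rowChange_eq_some_iff]
      simp only [← hAB _ d hd, ← hAB _ e hec]
      exact ⟨hed'.1, hed'.2.1, hed'.2.2.1, fun x hex hxd =>
        hAB _ x (hxd.le.trans hd) ▸ hed'.2.2.2 x hex hxd⟩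

/-- The top travel of `A` enters row `i` in one of the first `c` columns. -/
def EntersBy (A : ℕ → ℕ → ℤ) (n i c : ℕ) : Prop :=
  ∃ d ≤ c, ttEntry A n i = some d

theorem EntersBy.succ_of_ne {u v : ℕ} (h : EntersBy A n i c) (hcu : c ≤ u) (huv : u < v)
    (hv : v ≤ n) (hne : A i u ≠ A i v) : EntersBy A n (i + 1) v := by
  obtain ⟨d, hdc, hd⟩ := h
  obtain ⟨e, hev, he⟩ := exists_rowChange_le (hdc.trans hcu) huv hv hne
  exact ⟨e, hev, ttEntry_succ_of_eq_some hd ▸ he⟩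

theorem EntersBy.reorient_of_lt (h : EntersBy A n i c) (hS : ∀ x ∈ S, c < x) :
    EntersBy (reorient A S) n i c := by
  obtain ⟨d, hdc, hd⟩ := h
  refine ⟨d, hdc, ttEntry_congr (fun i j hj => ?_) hdc hd⟩
  exact (reorient_of_notMem fun hjS => (hS j hjS).not_ge hj).symm

theorem ttFollows.exists_ttEntry_eq_some (h : ttFollows A n D) :
    ∃ c, ttEntry A n (D.card + 1) = some c := by
  obtain rfl | hD := D.eq_empty_or_nonempty
  · exact ⟨1, rfl⟩
  by_contra! hnone
  have hsub : D ⊆ (Icc 2 D.card).image fun i => (ttEntry A n i).getD 0 := by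
    intro c hc
    obtain ⟨i, hi, hiD, hic⟩ := (h.2 c).mp hc
    have hne : i ≠ D.card + 1 := fun h => hnone c (h ▸ hic)
    exact mem_image.mpr ⟨i, mem_Icc.mpr ⟨hi, by omega⟩, by simp [hic]⟩
  have hcard : D.card ≤ D.card + 1 - 2 :=
    (card_le_card hsub).trans (card_image_le.trans_eq (Nat.card_Icc 2 D.card))
  have := hD.card_pos
  omega

theorem ttFollows.entersBy (h : ttFollows A n D) (hD : D ⊆ Icc 2 c) (hc : 1 ≤ c) :
    EntersBy A n (D.card + 1) c := by
  obtain ⟨d, hd⟩ := h.exists_ttEntry_eq_some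
  refine ⟨d, ?_, hd⟩
  obtain rfl | hne := D.eq_empty_or_nonempty
  · obtain rfl : 1 = d := Option.some.inj hd
    exact hc
  · have hdD : d ∈ D := (h.2 d).mpr ⟨D.card + 1, by have := hne.card_pos; omega, le_rfl, hd⟩
    exact (mem_Icc.mp (hD hdD)).2

theorem EntersBy.exists_reorient_succ (h : EntersBy A n i c) (hc : c + 1 ≤ n)
    (hA : A i (c + 1) ≠ 0) :
    ∃ T ⊆ {c + 1}, EntersBy (reorient A T) n (i + 1) (c + 1) := by
  by_cases heq : A i c = A i (c + 1)
  · exact ⟨{c + 1}, Subset.rfl, (h.reorient_of_lt (by simp)).succ_of_ne le_rfl c.lt_succ_self hc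
      (reorient_singleton_ne_right (by simp) heq hA)⟩
  · exact ⟨∅, by simp, h.succ_of_ne le_rfl c.lt_succ_self hc heq⟩

-- In every case row `i + 1` is made to change sign between columns `c + 2` and `c + 3`.
theorem EntersBy.exists_reorient_add_two (h : EntersBy A n i c) (hc : c + 3 ≤ n)
    (hA₁ : A i (c + 1) ≠ 0) (hA₂ : A i (c + 2) ≠ 0) (hB₂ : A (i + 1) (c + 2) ≠ 0) :
    ∃ x ∈ Ioc c (c + 3), ∃ T ⊆ {x}, EntersBy (reorient A T) n (i + 2) (c + 3) := by
  by_cases hB : A (i + 1) (c + 2) = A (i + 1) (c + 3)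
  · by_cases hA : A i (c + 1) = A i (c + 2)
    · refine ⟨c + 2, by simp, {c + 2}, Subset.rfl, ?_⟩
      have hrow : EntersBy (reorient A {c + 2}) n (i + 1) (c + 2) :=
        (h.reorient_of_lt (by simp)).succ_of_ne (by omega) (by omega) (by omega)
          (reorient_singleton_ne_right (by simp) hA hA₂)
      exact hrow.succ_of_ne le_rfl (by omega) hc (reorient_singleton_ne_left (by simp) hB hB₂)
    · refine ⟨c + 3, by simp, {c + 3}, Subset.rfl, ?_⟩
      have hrow : EntersBy A n (i + 1) (c + 2) :=
        h.succ_of_ne (by omega) (by omega) (by omega) hA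
      exact (hrow.reorient_of_lt (by simp)).succ_of_ne le_rfl (by omega) hc
        (reorient_singleton_ne_right (by simp) hB (hB ▸ hB₂))
  · obtain ⟨T, hT, hrow⟩ := h.exists_reorient_succ (by omega) hA₁
    have hnot (j : ℕ) (hj : c + 1 < j) : j ∉ T := fun hjT =>
      hj.ne' (mem_singleton.mp (hT hjT))
    refine ⟨c + 1, by simp, T, hT, hrow.succ_of_ne (u := c + 2) (by omega) (by omega) hc ?_⟩
    rwa [reorient_of_notMem (hnot _ (by omega)), reorient_of_notMem (hnot _ (by omega))]

/-- After reversing at most `t` of the first `c` columns of `A`, the top travel enters row `i` in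
one of these columns. -/
def CanEnterBy (A : ℕ → ℕ → ℤ) (n i c t : ℕ) : Prop :=
  ∃ S ⊆ Ioc 0 c, S.card ≤ t ∧ EntersBy (reorient A S) n i c

theorem EntersBy.canEnterBy (h : EntersBy A n i c) : CanEnterBy A n i c 0 :=
  ⟨∅, by simp, by simp, h⟩

theorem CanEnterBy.extend {i' c' : ℕ} (h : CanEnterBy A n i c t)
    (hext : ∀ S, EntersBy (reorient A S) n i c →
      ∃ x ∈ Ioc c c', ∃ T ⊆ {x}, EntersBy (reorient (reorient A S) T) n i' c') :
    CanEnterBy A n i' c' (t + 1) := by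
  obtain ⟨S, hS, hSt, hrow⟩ := h
  obtain ⟨x, hx, T, hT, hrow'⟩ := hext S hrow
  have hcc' : c ≤ c' := (mem_Ioc.mp hx).1.le.trans (mem_Ioc.mp hx).2
  have hTx : T ⊆ Ioc c c' := hT.trans (singleton_subset_iff.mpr hx)
  have hdisj : Disjoint S T := (Ioc_disjoint_Ioc_of_le le_rfl).mono hS hTx
  refine ⟨S ∪ T, union_subset (hS.trans (Ioc_subset_Ioc_right hcc'))
    (hTx.trans (Ioc_subset_Ioc_left c.zero_le)), ?_, reorient_reorient hdisj ▸ hrow'⟩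
  exact (card_union_le S T).trans (add_le_add hSt (card_le_card hT))

theorem CanEnterBy.succ (h : CanEnterBy A n i c t) (hc : c + 1 ≤ n) (hA : A i (c + 1) ≠ 0) :
    CanEnterBy A n (i + 1) (c + 1) (t + 1) :=
  h.extend fun _ hrow =>
    ⟨c + 1, by simp, hrow.exists_reorient_succ hc (reorient_ne_zero hA)⟩

theorem CanEnterBy.add_two (h : CanEnterBy A n i c t) (hc : c + 3 ≤ n)
    (hA₁ : A i (c + 1) ≠ 0) (hA₂ : A i (c + 2) ≠ 0) (hB₂ : A (i + 1) (c + 2) ≠ 0) :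
    CanEnterBy A n (i + 2) (c + 3) (t + 1) :=
  h.extend fun _ hrow => hrow.exists_reorient_add_two hc (reorient_ne_zero hA₁)
    (reorient_ne_zero hA₂) (reorient_ne_zero hB₂)

theorem EntersBy.canEnterBy_add_two_mul (hA : ∀ i ∈ Icc 1 r, ∀ j ∈ Icc 1 n, A i j ≠ 0)
    (h : EntersBy A n i c) (hi : 1 ≤ i) (hr : i + 2 * t ≤ r + 1) (hn : c + 3 * t ≤ n) :
    CanEnterBy A n (i + 2 * t) (c + 3 * t) t := by
  induction t with
  | zero => exact h.canEnterBy
  | succ t ih =>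
    refine (ih (by omega) (by omega)).add_two (by omega) ?_ ?_ ?_ <;>
      exact hA _ (mem_Icc.mpr (by omega)) _ (mem_Icc.mpr (by omega))

theorem IsNeighborly.not_canEnterBy (h : IsNeighborly A r n k) (hc : c ≤ n) (ht : t ≤ k) :
    ¬ CanEnterBy A n (r + 1) c t := by
  rintro ⟨S, hS, hSt, d, -, hd⟩
  exact h S (hS.trans (Ioc_subset_Ioc_right hc)) (hSt.trans ht) (Option.isSome_of_eq_some hd)

theorem not_isNeighborlyTravel_of_card_add_two_mul_eq
    (hA : ∀ i ∈ Icc 1 r, ∀ j ∈ Icc 1 n, A i j ≠ 0) (hcard : D.card + 2 * t = r)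
    (hD : D ⊆ Icc 2 c) (hc : 1 ≤ c) (hn : c + 3 * t ≤ n) (ht : t ≤ k) :
    ¬ IsNeighborlyTravel A r n k D := by
  rintro ⟨R, -, hfollows, hneighborly⟩
  have hreach : CanEnterBy (reorient A R) n (D.card + 1 + 2 * t) (c + 3 * t) t :=
    (hfollows.entersBy hD hc).canEnterBy_add_two_mul
      (fun i hi j hj => reorient_ne_zero (hA i hi j hj)) (by omega) (by omega) hn
  rw [show D.card + 1 + 2 * t = r + 1 by omega] at hreach
  exact hneighborly.not_canEnterBy hn ht hreach

theorem not_isNeighborlyTravel_of_card_add_two_mul_add_one_eq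
    (hA : ∀ i ∈ Icc 1 r, ∀ j ∈ Icc 1 n, A i j ≠ 0) (hcard : D.card + 2 * t + 1 = r)
    (hD : D ⊆ Icc 2 c) (hc : 1 ≤ c) (hn : c + 3 * t + 1 ≤ n) (ht : t + 1 ≤ k) :
    ¬ IsNeighborlyTravel A r n k D := by
  rintro ⟨R, -, hfollows, hneighborly⟩
  have hAR : ∀ i ∈ Icc 1 r, ∀ j ∈ Icc 1 n, reorient A R i j ≠ 0 :=
    fun i hi j hj => reorient_ne_zero (hA i hi j hj)
  have hreach : CanEnterBy (reorient A R) n (D.card + 1 + 2 * t) (c + 3 * t) t :=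
    (hfollows.entersBy hD hc).canEnterBy_add_two_mul hAR (by omega) (by omega) (by omega)
  rw [show D.card + 1 + 2 * t = r by omega] at hreach
  exact hneighborly.not_canEnterBy hn ht (hreach.succ hn
    (hAR _ (mem_Icc.mpr (by omega)) _ (mem_Icc.mpr (by omega))))

/-- The plain travels of an `r × n` matrix, each encoded by the columns of its vertical moves. -/
def plainTravels (r n : ℕ) : Finset (Finset ℕ) :=
  (range r).biUnion fun s => powersetCard s (Icc 2 n)

theorem mem_plainTravels (hr : 1 ≤ r) : D ∈ plainTravels r n ↔ IsPlainTravel r n D := by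
  simp [plainTravels, IsPlainTravel, and_comm, Nat.lt_iff_le_pred hr]

theorem card_plainTravels (r n : ℕ) :
    (plainTravels r n).card = ∑ i ∈ range r, (n - 1).choose i := by
  rw [plainTravels, card_biUnion fun i _ j _ hij => pairwise_disjoint_powersetCard _ hij]
  simp

/-- The plain travels with `r - 2i + 1` or `r - 2i` vertical moves, the last of which comes so early
that at most `i` reversals of later columns make the top travel positive. The subtractions are
meant for `2i ≤ r` and `3i ≤ n`. -/
def earlyTravels (r n i : ℕ) : Finset (Finset ℕ) :=
  powersetCard (r - 2 * i + 1) (Icc 2 (n - 3 * i + 2)) ∪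
    powersetCard (r - 2 * i) (Icc 2 (n - 3 * i))

theorem mem_earlyTravels :
    D ∈ earlyTravels r n i ↔
      D ⊆ Icc 2 (n - 3 * i + 2) ∧ D.card = r - 2 * i + 1 ∨
        D ⊆ Icc 2 (n - 3 * i) ∧ D.card = r - 2 * i := by
  simp only [earlyTravels, mem_union, mem_powersetCard]

theorem card_earlyTravels (r n i : ℕ) :
    (earlyTravels r n i).card =
      (n - 3 * i + 1).choose (r - 2 * i + 1) + (n - 3 * i - 1).choose (r - 2 * i) := by
  rw [earlyTravels, card_union_of_disjoint]
  · simp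
  · rw [disjoint_left]
    grind

theorem pairwiseDisjoint_earlyTravels (hr : 2 * k ≤ r) :
    (Icc 1 k : Set ℕ).PairwiseDisjoint (earlyTravels r n) := by
  intro i hi j hj hij
  rw [Function.onFun, disjoint_left]
  simp only [Finset.coe_Icc, Set.mem_Icc] at hi hj
  grind [mem_earlyTravels]

theorem earlyTravels_subset_plainTravels (hi : 1 ≤ i) (hr : 2 * i ≤ r) (hn : 3 * i ≤ n) :
    earlyTravels r n i ⊆ plainTravels r n := by
  intro D hD
  rw [mem_plainTravels (by omega)]
  obtain ⟨hsub, hcard⟩ | ⟨hsub, hcard⟩ := mem_earlyTravels.mp hD <;>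
    exact ⟨hsub.trans (Icc_subset_Icc_right (by omega)), by omega⟩

theorem not_isNeighborlyTravel_of_mem_earlyTravels
    (hA : ∀ i ∈ Icc 1 r, ∀ j ∈ Icc 1 n, A i j ≠ 0) (hi : i ∈ Icc 1 k) (hr : 2 * i ≤ r)
    (hn : 3 * i + 1 ≤ n) (hD : D ∈ earlyTravels r n i) : ¬ IsNeighborlyTravel A r n k D := by
  rw [mem_Icc] at hi
  obtain ⟨hsub, hcard⟩ | ⟨hsub, hcard⟩ := mem_earlyTravels.mp hD
  · exact not_isNeighborlyTravel_of_card_add_two_mul_add_one_eq (t := i - 1) hA (by omega) hsub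
      (by omega) (by omega) (by omega)
  · exact not_isNeighborlyTravel_of_card_add_two_mul_eq (t := i) hA (by omega) hsub
      (by omega) (by omega) hi.2

theorem statement_7_general (hk : 1 ≤ k) (hr : 2 * k ≤ r) (hn : 3 * k + 1 ≤ n)
    (hA : ∀ i ∈ Icc 1 r, ∀ j ∈ Icc 1 n, A i j ≠ 0) :
    {D : Finset ℕ | IsPlainTravel r n D ∧ IsNeighborlyTravel A r n k D}.ncard ≤
      (∑ i ∈ range r, (n - 1).choose i) -
        ∑ i ∈ Icc 1 k,
          ((n - 3 * i + 1).choose (r - 2 * i + 1) + (n - 3 * i - 1).choose (r - 2 * i)) := by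
  have hsub : (Icc 1 k).biUnion (earlyTravels r n) ⊆ plainTravels r n :=
    biUnion_subset.mpr fun i hi => by
      rw [mem_Icc] at hi
      exact earlyTravels_subset_plainTravels hi.1 (by omega) (by omega)
  have hmem : {D : Finset ℕ | IsPlainTravel r n D ∧ IsNeighborlyTravel A r n k D} ⊆
      ↑(plainTravels r n \ (Icc 1 k).biUnion (earlyTravels r n)) := by
    rintro D ⟨hplain, hneighborly⟩
    refine mem_sdiff.mpr ⟨(mem_plainTravels (by omega)).mpr hplain, fun hD => ?_⟩
    obtain ⟨i, hi, hDi⟩ := mem_biUnion.mp hD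
    have hik := (mem_Icc.mp hi).2
    exact not_isNeighborlyTravel_of_mem_earlyTravels hA hi (by omega) (by omega) hDi hneighborly
  calc _ ≤ (plainTravels r n \ (Icc 1 k).biUnion (earlyTravels r n)).card :=
        (Set.ncard_le_ncard hmem (finite_toSet _)).trans_eq (Set.ncard_coe_finset _)
    _ = _ := by
      rw [card_sdiff_of_subset hsub, card_plainTravels,
        card_biUnion (pairwiseDisjoint_earlyTravels hr)]
      simp only [card_earlyTravels]

/-- For `k ≥ 1`, `r ≥ 2k+1`, `n ≥ 2r-1` and any `r × n` sign matrix `A`, the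
number of `k`-neighborly plain travels of `A` is at most
`∑_{i=0}^{r-1} C(n-1,i) - ∑_{i=1}^{k} (C(n-3i+1, r-2i+1) + C(n-3i-1, r-2i))`. -/
theorem statement_7 (k r n : ℕ) (hk : 1 ≤ k) (hr : 2 * k + 1 ≤ r) (hn : 2 * r - 1 ≤ n)
    (A : ℕ → ℕ → ℤ) (hA : IsSignMatrix r n A) :
    {D : Finset ℕ | IsPlainTravel r n D ∧ IsNeighborlyTravel A r n k D}.ncard ≤
      (∑ i ∈ Finset.range r, (n - 1).choose i) -
        ∑ i ∈ Finset.Icc 1 k,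
          ((n - 3 * i + 1).choose (r - 2 * i + 1) + (n - 3 * i - 1).choose (r - 2 * i)) :=
  statement_7_general hk (by omega) (by omega) hA.ne_zero
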